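/- Harmony base lemma: For any consistent set E ⊆ Φ, any formula ¬[C]^T_X φ ∈ E, any family {D_i}_{i∈I} of pairwise disjoint subsets of the coalition C, and any set {[D_i]^T_X ψ_i}_{i∈I} of formulae from E, if F = {χ | B^∅_X χ ∈ E} ∪ {B^T_Y τ → τ | τ ∈ Φ, Y ⊆ V} and G = {¬φ} ∪ {ψ_i}_{i∈I} ∪ {σ | B^∅_∅ σ ∈ E} ∪ {B^T_Z η → η | η ∈ Φ, Z ⊆ V}, then the pair (F, G) is in T-harmony. -/

import Mathlib

/- Language: formulas over atomic propositions P, data variables V, actors 𝒜 = A.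
   `bel T X φ` is B^T_X φ ; `str C T X φ` is [C]^T_X φ. -/
inductive Formula (P V A : Type) : Type
  | atom : P → Formula P V A
  | neg : Formula P V A → Formula P V A
  | imp : Formula P V A → Formula P V A → Formula P V A
  | bel : Set V → Set V → Formula P V A → Formula P V A
  | str : Set A → Set V → Set V → Formula P V A → Formula P V A

variable {P V A : Type}

/-- Propositional tautologies: true under every valuation respecting ¬ and →. -/
def Tautology (φ : Formula P V A) : Prop :=
  ∀ v : Formula P V A → Prop,
    (∀ ψ, v (Formula.neg ψ) ↔ ¬ v ψ) →
    (∀ ψ χ, v (Formula.imp ψ χ) ↔ (v ψ → v χ)) →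
    v φ

/-- Theorems of the logical system of doxastic strategies. -/
inductive Thm : Formula P V A → Prop
  | taut {φ : Formula P V A} : Tautology φ → Thm φ
  | truth {X : Set V} {φ : Formula P V A} :
      Thm (Formula.imp (Formula.bel ∅ X φ) φ)
  | negIntro {T X : Set V} {φ : Formula P V A} :
      Thm (Formula.imp (Formula.neg (Formula.bel T X φ))
        (Formula.bel ∅ X (Formula.neg (Formula.bel T X φ))))
  | distrib {T X : Set V} {φ ψ : Formula P V A} :
      Thm (Formula.imp (Formula.bel T X (Formula.imp φ ψ))
        (Formula.imp (Formula.bel T X φ) (Formula.bel T X ψ)))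
  | trust {T X Y : Set V} {φ : Formula P V A} :
      Thm (Formula.bel T X (Formula.imp (Formula.bel T Y φ) φ))
  | monoB {T T' X X' : Set V} {φ : Formula P V A} :
      T ⊆ T' → X ⊆ X' →
      Thm (Formula.imp (Formula.bel T X φ) (Formula.bel T' X' φ))
  | monoS {C C' : Set A} {T T' X X' : Set V} {φ : Formula P V A} :
      T ⊆ T' → X ⊆ X' → C ⊆ C' →
      Thm (Formula.imp (Formula.str C T X φ) (Formula.str C' T' X' φ))
  | coop {C D : Set A} {T X : Set V} {φ ψ : Formula P V A} :
      C ∩ D = ∅ →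
      Thm (Formula.imp (Formula.str C T X (Formula.imp φ ψ))
        (Formula.imp (Formula.str D T X φ) (Formula.str (C ∪ D) T X ψ)))
  | strIntro₁ {C : Set A} {T X : Set V} {φ : Formula P V A} :
      Thm (Formula.imp (Formula.str C T X φ) (Formula.bel T X (Formula.str C T X φ)))
  | strIntro₂ {C : Set A} {T X : Set V} {φ : Formula P V A} :
      Thm (Formula.imp (Formula.bel T X (Formula.str C T X φ)) (Formula.str C T X φ))
  | unavoid {T X Y : Set V} {φ : Formula P V A} :
      Thm (Formula.imp (Formula.bel T X (Formula.str ∅ T Y φ)) (Formula.str ∅ T X φ))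
  | pub {T : Set V} {φ : Formula P V A} :
      Thm (Formula.imp (Formula.bel T ∅ φ) (Formula.str ∅ T ∅ φ))
  | mp {φ ψ : Formula P V A} : Thm (Formula.imp φ ψ) → Thm φ → Thm ψ
  | nec {φ : Formula P V A} : Thm φ → Thm (Formula.bel ∅ ∅ φ)

/-- `Deduces F φ`: φ is derivable from F together with the theorems using only Modus Ponens. -/
inductive Deduces (F : Set (Formula P V A)) : Formula P V A → Prop
  | thm {φ : Formula P V A} : Thm φ → Deduces F φ
  | mem {φ : Formula P V A} : φ ∈ F → Deduces F φ
  | mp {φ ψ : Formula P V A} :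
      Deduces F (Formula.imp φ ψ) → Deduces F φ → Deduces F ψ

def Consistent (F : Set (Formula P V A)) : Prop :=
  ¬ ∃ φ : Formula P V A, Deduces F φ ∧ Deduces F (Formula.neg φ)

def MaximalConsistent (F : Set (Formula P V A)) : Prop :=
  Consistent F ∧ ∀ G : Set (Formula P V A), Consistent G → F ⊆ G → F = G

/-- A game. -/
structure Game (P V A : Type) : Type 1 where
  W : Type
  sim : V → W → W → Prop
  sim_equiv : ∀ x : V, Equivalence (sim x)
  trust : W → Set V
  Δ : Type
  delta_nonempty : Nonempty Δ
  M : W → (A → Δ) → W → Prop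
  pi : P → Set W

/-- `w ∼_X u`. -/
def Game.simSet (G : Game P V A) (X : Set V) (w u : G.W) : Prop :=
  ∀ x ∈ X, G.sim x w u

/-- The satisfaction relation `w ⊨ φ` (as `Sat G φ w`). -/
def Sat (G : Game P V A) : Formula P V A → G.W → Prop
  | Formula.atom p, w => w ∈ G.pi p
  | Formula.neg φ, w => ¬ Sat G φ w
  | Formula.imp φ ψ, w => Sat G φ w → Sat G ψ w
  | Formula.bel T X φ, w =>
      ∀ u : G.W, G.simSet X w u → T ⊆ G.trust u → Sat G φ u
  | Formula.str C T X φ, w =>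
      ∃ s : {a : A // a ∈ C} → G.Δ,
        ∀ (u v : G.W) (δ : A → G.Δ),
          G.simSet X w u → T ⊆ G.trust u →
          (∀ (a : A) (h : a ∈ C), s ⟨a, h⟩ = δ a) →
          G.M u δ v → T ⊆ G.trust v → Sat G φ v

/- ===================== Canonical game ===================== -/

/-- One block `X_i, b_i, T_i, F_i` of a canonical state. -/
structure Block (P V A B : Type) where
  X : Set V
  b : B
  T : Set V
  F : Set (Formula P V A)

variable {B : Type}

/-- `F(w)`: the last set of formulae of the sequence (or `F0` for the root). -/
def cF (F0 : Set (Formula P V A)) (l : List (Block P V A B)) : Set (Formula P V A) :=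
  l.getLast?.elim F0 Block.F

/-- `𝒯_w = T(w)`: the last dataset of the sequence (or `T0` for the root). -/
def cTrust (T0 : Set V) (l : List (Block P V A B)) : Set V :=
  l.getLast?.elim T0 Block.T

/-- Membership of a sequence in the set of canonical states `W`. -/
inductive IsState (T0 : Set V) (F0 : Set (Formula P V A)) :
    List (Block P V A B) → Prop
  | nil :
      (∀ (Y : Set V) (ψ : Formula P V A),
        Formula.imp (Formula.bel T0 Y ψ) ψ ∈ F0) →
      IsState T0 F0 []
  | snoc {l : List (Block P V A B)} {bl : Block P V A B} :
      IsState T0 F0 l →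
      MaximalConsistent bl.F →
      (∀ φ : Formula P V A, Formula.bel ∅ bl.X φ ∈ cF F0 l → φ ∈ bl.F) →
      (∀ (Y : Set V) (ψ : Formula P V A),
        Formula.imp (Formula.bel bl.T Y ψ) ψ ∈ bl.F) →
      IsState T0 F0 (l ++ [bl])

/-- The canonical states. -/
def CState (T0 : Set V) (F0 : Set (Formula P V A)) (B : Type) : Type :=
  {l : List (Block P V A B) // IsState T0 F0 l}

attribute [local instance] Classical.propDecidable

/-- Length of the longest common prefix of two sequences. -/
noncomputable def cpl {α : Type} : List α → List α → Nat
  | a :: as, b :: bs => if a = b then cpl as bs + 1 else 0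
  | _, _ => 0

/-- The blocks labelling the edges on the unique simple path between two
nodes of the canonical tree. -/
noncomputable def pathBlocks (w u : List (Block P V A B)) : List (Block P V A B) :=
  w.drop (cpl w u) ++ u.drop (cpl w u)

/-- `w ∼_x u` in the canonical game: every edge along the unique simple path
between `w` and `u` is labelled with `x`. -/
def csimVar (x : V) (w u : List (Block P V A B)) : Prop :=
  ∀ bl ∈ pathBlocks w u, x ∈ bl.X

/-- `w ∼_X u` in the canonical game. -/
def csim (X : Set V) (w u : List (Block P V A B)) : Prop :=
  ∀ x ∈ X, csimVar x w u

/-- The canonical mechanism `M`. -/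
def Mech (T0 : Set V) (F0 : Set (Formula P V A))
    (w : CState T0 F0 B) (δ : A → Formula P V A × CState T0 F0 B)
    (v : CState T0 F0 B) : Prop :=
  ∀ (C : Set A) (T X : Set V) (φ : Formula P V A),
    Formula.str C T X φ ∈ cF F0 w.1 →
    (∀ a ∈ C, (δ a).1 = φ) →
    (∀ a ∈ C, csim X w.1 (δ a).2.1) →
    T ⊆ cTrust T0 w.1 → T ⊆ cTrust T0 v.1 →
    φ ∈ cF F0 v.1

/-- Satisfaction `w ⊨ φ` on the canonical game (as `CSat T0 F0 φ w`). -/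
def CSat (T0 : Set V) (F0 : Set (Formula P V A)) :
    Formula P V A → CState T0 F0 B → Prop
  | Formula.atom p, w => Formula.atom p ∈ cF F0 w.1
  | Formula.neg φ, w => ¬ CSat T0 F0 φ w
  | Formula.imp φ ψ, w => CSat T0 F0 φ w → CSat T0 F0 ψ w
  | Formula.bel T X φ, w =>
      ∀ u : CState T0 F0 B, csim X w.1 u.1 → T ⊆ cTrust T0 u.1 → CSat T0 F0 φ u
  | Formula.str C T X φ, w =>
      ∃ s : {a : A // a ∈ C} → Formula P V A × CState T0 F0 B,
        ∀ (u v : CState T0 F0 B) (δ : A → Formula P V A × CState T0 F0 B),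
          csim X w.1 u.1 → T ⊆ cTrust T0 u.1 →
          (∀ (a : A) (h : a ∈ C), s ⟨a, h⟩ = δ a) →
          Mech T0 F0 u δ v → T ⊆ cTrust T0 v.1 → CSat T0 F0 φ v

/- ===================== Harmony ===================== -/

/-- Conjunction definable from ¬ and →. -/
def fand (φ ψ : Formula P V A) : Formula P V A :=
  Formula.neg (Formula.imp φ (Formula.neg ψ))

/-- A canonical tautology (verum). -/
noncomputable def verum (P V A : Type) [Nonempty (Formula P V A)] : Formula P V A :=
  Formula.imp (Classical.arbitrary (Formula P V A)) (Classical.arbitrary (Formula P V A))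

/-- Conjunction of a finite list of formulae. -/
noncomputable def conjList [Nonempty (Formula P V A)] :
    List (Formula P V A) → Formula P V A
  | [] => verum P V A
  | φ :: l => fand φ (conjList l)

/-- The pair `(F, G)` is in `T`-harmony: `F ⊬ [∅]^T_V ¬⋀G'` for each finite `G' ⊆ G`. -/
def THarmony [Nonempty (Formula P V A)] (T : Set V)
    (F G : Set (Formula P V A)) : Prop :=
  ∀ l : List (Formula P V A), (∀ ψ ∈ l, ψ ∈ G) →
    ¬ Deduces F (Formula.str ∅ T (Set.univ : Set V) (Formula.neg (conjList l)))

/-!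
Call `χ` unavoidable if `E ⊢ [∅]^T_X χ`. Suppose `F ⊢ [∅]^T_V ¬⋀G'`. Since `E ⊢ B^T_X χ` for
all `χ ∈ F`, also `E ⊢ B^T_X [∅]^T_V ¬⋀G'`, so `¬⋀G'` is unavoidable by Belief in Unavoidability.
By Public Belief, every member of `G'` other than `¬φ` and the `ψ i` is unavoidable as well.
Hence `φ` is derivable from unavoidable formulae and finitely many of the `ψ i`. The deduction
theorem removes the `ψ i` one at a time, and Cooperation then reassembles
`E ⊢ [⋃ i, D i]^T_X φ`, which contradicts `¬[C]^T_X φ ∈ E`.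
-/

namespace Deduces

variable {E F G : Set (Formula P V A)} {T X : Set V} {φ ψ : Formula P V A}

theorem mono (hFG : F ⊆ G) (h : Deduces F φ) : Deduces G φ := by
  induction h with
  | thm h => exact .thm h
  | mem h => exact .mem (hFG h)
  | mp _ _ ihimp ihφ => exact .mp ihimp ihφ

theorem exists_finset_subset (h : Deduces F φ) :
    ∃ s : Finset (Formula P V A), ↑s ⊆ F ∧ Deduces ↑s φ := by
  induction h with
  | thm h => exact ⟨∅, by simp, .thm h⟩
  | @mem χ h => exact ⟨{χ}, by simpa using h, .mem (by simp)⟩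
  | mp _ _ ihimp ihφ =>
    obtain ⟨s, hsF, hs⟩ := ihimp
    obtain ⟨t, htF, ht⟩ := ihφ
    refine ⟨s ∪ t, ?_, .mp (hs.mono ?_) (ht.mono ?_)⟩ <;> simp [hsF, htF]

theorem exists_finset_union_image {I : Type*} {f : I → Formula P V A}
    (h : Deduces (F ∪ Set.range f) φ) : ∃ s : Finset I, Deduces (F ∪ f '' s) φ := by
  obtain ⟨t, ht, htφ⟩ := h.exists_finset_subset
  have hsub : ((t.filter (· ∉ F) : Finset (Formula P V A)) : Set (Formula P V A)) ⊆
      f '' Set.univ := by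
    rw [Finset.coe_filter, Set.image_univ]
    exact Set.sdiff_subset_iff.2 ht
  obtain ⟨s, -, hs⟩ := Finset.subset_set_image_iff.1 hsub
  refine ⟨s, htφ.mono (Set.sdiff_subset_iff.1 ?_)⟩
  rw [← Finset.coe_image, hs, Finset.coe_filter]
  rfl

theorem imp_of_insert (h : Deduces (insert φ F) ψ) : Deduces F (.imp φ ψ) := by
  have weaken {χ : Formula P V A} (hχ : Deduces F χ) : Deduces F (.imp φ χ) :=
    .mp (.thm (.taut fun v _ hi => by simp only [hi]; tauto)) hχ
  induction h with
  | thm h => exact weaken (.thm h)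
  | mem h =>
    rcases h with rfl | h
    · exact .thm (.taut fun v _ hi => by simp only [hi]; tauto)
    · exact weaken (.mem h)
  | @mp χ ξ _ _ ihimp ihχ =>
    have distrib : Thm (.imp (.imp φ (.imp χ ξ)) (.imp (.imp φ χ) (.imp φ ξ))) :=
      .taut fun v _ hi => by simp only [hi]; tauto
    exact .mp (.mp (.thm distrib) ihimp) ihχ

theorem of_insert_neg (h : Deduces (insert (.neg φ) F) ψ)
    (hneg : Deduces (insert (.neg φ) F) (.neg ψ)) : Deduces F φ := by
  have reductio : Thm (.imp (.imp (.neg φ) ψ) (.imp (.imp (.neg φ) (.neg ψ)) φ)) :=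
    .taut fun v hn hi => by simp only [hn, hi]; tauto
  exact .mp (.mp (.thm reductio) h.imp_of_insert) hneg.imp_of_insert

theorem conjList_of_forall_mem [Nonempty (Formula P V A)] {l : List (Formula P V A)}
    (h : ∀ χ ∈ l, Deduces F χ) : Deduces F (conjList l) := by
  induction l with
  | nil => exact .thm (.taut fun v _ hi => by simp only [conjList, verum, hi, imp_self])
  | cons χ l ih =>
    rw [List.forall_mem_cons] at h
    have and_intro : Thm (.imp χ (.imp (conjList l) (conjList (χ :: l)))) :=
      .taut fun v hn hi => by simp only [conjList, fand, hn, hi]; tauto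
    exact .mp (.mp (.thm and_intro) h.1) (ih h.2)

theorem bel_mono {T' X' : Set V} (hT : T ⊆ T') (hX : X ⊆ X') (h : Deduces E (.bel T X φ)) :
    Deduces E (.bel T' X' φ) :=
  .mp (.thm (.monoB hT hX)) h

theorem str_mono {C C' : Set A} {T' X' : Set V} (hC : C ⊆ C') (hT : T ⊆ T') (hX : X ⊆ X')
    (h : Deduces E (.str C T X φ)) : Deduces E (.str C' T' X' φ) :=
  .mp (.thm (.monoS hT hX hC)) h

theorem str_union {C D : Set A} (hCD : Disjoint C D) (himp : Deduces E (.str C T X (.imp φ ψ)))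
    (hφ : Deduces E (.str D T X φ)) : Deduces E (.str (C ∪ D) T X ψ) :=
  .mp (.mp (.thm (.coop hCD.inter_eq)) himp) hφ

theorem bel_of_thm (h : Thm φ) : Deduces E (.bel T X φ) :=
  bel_mono (Set.empty_subset T) (Set.empty_subset X) (.thm (.nec h))

theorem bel_of_forall_mem (hF : ∀ χ ∈ F, Deduces E (.bel T X χ)) (h : Deduces F φ) :
    Deduces E (.bel T X φ) := by
  induction h with
  | thm h => exact bel_of_thm h
  | mem h => exact hF _ h
  | mp _ _ ihimp ihφ => exact .mp (.mp (.thm .distrib) ihimp) ihφ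

theorem str_empty_of_bel_empty (h : Deduces E (.bel T ∅ φ)) : Deduces E (.str ∅ T X φ) :=
  str_mono subset_rfl subset_rfl (Set.empty_subset X) (.mp (.thm .pub) h)

end Deduces

/-- The set `{χ | E ⊢ [∅]^T_X χ}` of formulae that, according to `E`, come true whatever the actors
do. These are the premises that Cooperation can discharge without enlarging a coalition. -/
def unavoidable (E : Set (Formula P V A)) (T X : Set V) : Set (Formula P V A) :=
  {χ | Deduces E (.str ∅ T X χ)}

namespace Deduces

variable {E : Set (Formula P V A)} {T X : Set V} {φ : Formula P V A}

theorem str_empty_of_unavoidable (h : Deduces (unavoidable E T X) φ) :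
    Deduces E (.str ∅ T X φ) := by
  induction h with
  | thm h => exact str_empty_of_bel_empty (bel_of_thm h)
  | mem h => exact h
  | mp _ _ ihimp ihφ => simpa using str_union (Set.disjoint_empty ∅) ihimp ihφ

variable {I : Type*} {D : I → Set A} {ψ : I → Formula P V A}

theorem str_biUnion {s : Finset I} (hD : (s : Set I).PairwiseDisjoint D)
    (hψ : ∀ i ∈ s, Deduces E (.str (D i) T X (ψ i)))
    (h : Deduces (unavoidable E T X ∪ ψ '' s) φ) :
    Deduces E (.str (⋃ i ∈ s, D i) T X φ) := by
  induction s using Finset.induction_on generalizing φ with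
  | empty => simpa using str_empty_of_unavoidable (by simpa using h)
  | insert i s hi ih =>
    rw [Finset.coe_insert, Set.pairwiseDisjoint_insert_of_notMem (by simpa using hi)] at hD
    rw [Finset.forall_mem_insert] at hψ
    rw [Finset.coe_insert, Set.image_insert_eq, Set.union_insert] at h
    have disjoint_biUnion : Disjoint (⋃ j ∈ s, D j) (D i) :=
      Set.disjoint_iUnion₂_left.2 fun j hj => (hD.2 j hj).symm
    rw [Finset.set_biUnion_insert, Set.union_comm]
    exact str_union disjoint_biUnion (ih hD.1 hψ.2 h.imp_of_insert) hψ.1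

theorem str_iUnion (hD : Pairwise (Function.onFun Disjoint D))
    (hψ : ∀ i, Deduces E (.str (D i) T X (ψ i)))
    (h : Deduces (unavoidable E T X ∪ Set.range ψ) φ) :
    Deduces E (.str (⋃ i, D i) T X φ) := by
  obtain ⟨s, hs⟩ := h.exists_finset_union_image
  exact (str_biUnion (hD.set_pairwise s) (fun i _ => hψ i) hs).str_mono
    (Set.iUnion₂_subset_iUnion _ _) subset_rfl subset_rfl

end Deduces

/-- Harmony base lemma. -/
theorem harmony_base {P V A : Type} [Nonempty (Formula P V A)]
    (E : Set (Formula P V A)) (hE : Consistent E)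
    (C : Set A) (T X : Set V) (φ : Formula P V A)
    (hneg : Formula.neg (Formula.str C T X φ) ∈ E)
    {I : Type} (D : I → Set A) (hDsub : ∀ i, D i ⊆ C)
    (hDdisj : Pairwise (Function.onFun Disjoint D))
    (ψ : I → Formula P V A)
    (hψ : ∀ i, Formula.str (D i) T X (ψ i) ∈ E) :
    THarmony T
      ({χ | Formula.bel ∅ X χ ∈ E} ∪
        {χ | ∃ (τ : Formula P V A) (Y : Set V),
          χ = Formula.imp (Formula.bel T Y τ) τ})
      ({Formula.neg φ} ∪ Set.range ψ ∪
        {σ | Formula.bel ∅ ∅ σ ∈ E} ∪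
        {χ | ∃ (η : Formula P V A) (Z : Set V),
          χ = Formula.imp (Formula.bel T Z η) η}) := by
  intro l hlG hF
  have hnot_conj : .neg (conjList l) ∈ unavoidable E T X := by
    refine .mp (.thm .unavoid) (hF.bel_of_forall_mem ?_)
    rintro _ (hχ | ⟨τ, Y, rfl⟩)
    · exact .bel_mono (Set.empty_subset T) subset_rfl (.mem hχ)
    · exact .thm .trust
  have hG : ∀ χ ∈ l, Deduces (insert (.neg φ) (unavoidable E T X ∪ Set.range ψ)) χ := by
    intro χ hχ
    refine .mem ?_
    rcases hlG χ hχ with ((rfl | hrange) | hbel) | ⟨η, Z, rfl⟩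
    · exact .inl rfl
    · exact .inr (.inr hrange)
    · exact .inr (.inl (.str_empty_of_bel_empty
        (.bel_mono (Set.empty_subset T) subset_rfl (.mem hbel))))
    · exact .inr (.inl (.str_empty_of_bel_empty (.thm .trust)))
  have hφ : Deduces (unavoidable E T X ∪ Set.range ψ) φ :=
    .of_insert_neg (.conjList_of_forall_mem hG) (.mem (.inr (.inl hnot_conj)))
  have hstr : Deduces E (.str (⋃ i, D i) T X φ) :=
    hφ.str_iUnion hDdisj fun i => .mem (hψ i)
  exact hE ⟨_, hstr.str_mono (Set.iUnion_subset hDsub) subset_rfl subset_rfl, .mem hneg⟩
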